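/- arXiv:2212.05433 — 7 statements merged into one kernel-verified Lean document; each statement's English description precedes it below -/
import Mathlib

section
/- Let N ⊊ M be nodes. If N is a singleton, assume additionally that every vertex is compatible with M. Then inner(N) ⊆ inner(M). -/
open Set

variable {Λ W ι : Type*}

/-- The clique of a leaf: vertices whose `Cl`-set contains the leaf. -/
def leafC (Cl : W → Set Λ) (ℓ : Λ) : Set W := {v | ℓ ∈ Cl v}

/-- `V(N)`: vertices with `Cl(v) ⊆ N`. -/
def Vset (Cl : W → Set Λ) (N : Set Λ) : Set W := {v | Cl v ⊆ N}

/-- `U(N)`: vertices with `Cl(v) = N`. -/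
def Uset (Cl : W → Set Λ) (N : Set Λ) : Set W := {v | Cl v = N}

/-- `I(N)`: vertices with `Cl(v) ⊊ N`. -/
def Iset (Cl : W → Set Λ) (N : Set Λ) : Set W := {v | Cl v ⊂ N}

/-- `E(N)`: vertices with `N ⊊ Cl(v)`. -/
def Eset (Cl : W → Set Λ) (N : Set Λ) : Set W := {v | N ⊂ Cl v}

/-- A vertex is compatible with a node `N`. -/
def Compatible (Cl : W → Set Λ) (v : W) (N : Set Λ) : Prop :=
  Cl v ⊆ N ∨ N ⊆ Cl v ∨ Cl v ∩ N = ∅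

/-- `inner(N)`: for a singleton node `{ℓ}` the components with `C(I) = C(ℓ)`;
for a non-singleton node the components with `C(I) ∩ I(N) ≠ ∅` and
`U(N) ∪ E(N) ⊊ C(I)`. -/
def innerSet (Cl : W → Set Λ) (CI : ι → Set W) (N : Set Λ) : Set ι :=
  {I | (∃ ℓ, N = {ℓ} ∧ CI I = leafC Cl ℓ) ∨
       ((¬ ∃ ℓ, N = {ℓ}) ∧ (CI I ∩ Iset Cl N).Nonempty ∧
        Uset Cl N ∪ Eset Cl N ⊂ CI I)}

/-- `middle_M(N) = {I ∈ inner(M) \ inner(N) : C(I) ∩ V(N) ≠ ∅}`. -/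
def middleSet (Cl : W → Set Λ) (CI : ι → Set W) (M N : Set Λ) : Set ι :=
  {I | I ∈ innerSet Cl CI M ∧ I ∉ innerSet Cl CI N ∧ (CI I ∩ Vset Cl N).Nonempty}

/-!
The strictness in `U(N) ∪ E(N) ⊊ C(I)` is automatic: the vertex witnessing `C(I) ∩ I(N) ≠ ∅` lies
in neither `U(N)` nor `E(N)`. So `I ∈ inner(N)`, for `|N| ≥ 2`, says that `C(I)` contains some `v`
with `Cl(v) ⊊ N` and every `v` with `N ⊆ Cl(v)`, and both conditions are monotone in `N`. For
`N = {ℓ}` the second condition for `M` is immediate from `ℓ ∈ M`. For the first, pick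
`m ∈ M ∖ {ℓ}` and `v ∈ C(ℓ) ∖ C(m)`: since `Cl(v)` meets `M` in `ℓ` and misses `m ∈ M`,
compatibility forces `Cl(v) ⊊ M`.
-/

section

variable {Cl : W → Set Λ} {CI : ι → Set W} {N M : Set Λ} {I : ι} {ℓ m : Λ}

theorem uset_union_eset : Uset Cl N ∪ Eset Cl N = {v | N ⊆ Cl v} := by
  ext v
  simp only [Uset, Eset, mem_union, mem_ofPred_eq, subset_iff_ssubset_or_eq, eq_comm, or_comm]

theorem Compatible.ssubset {v : W} (h : Compatible Cl v M) (hmeet : (Cl v ∩ M).Nonempty)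
    (hM : ¬ M ⊆ Cl v) : Cl v ⊂ M := by
  obtain hsub | hsup | hdisj := h
  · exact ⟨hsub, hM⟩
  · exact absurd hsup hM
  · exact absurd hdisj hmeet.ne_empty

theorem mem_innerSet_singleton : I ∈ innerSet Cl CI {ℓ} ↔ CI I = leafC Cl ℓ := by
  simp [innerSet]

theorem mem_innerSet_iff (hN : N.Nontrivial) :
    I ∈ innerSet Cl CI N ↔ (∃ v ∈ CI I, Cl v ⊂ N) ∧ ∀ v, N ⊆ Cl v → v ∈ CI I := by
  have hNs : ¬ ∃ ℓ, N = {ℓ} := fun ⟨_, h⟩ => hN.ne_singleton h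
  constructor
  · rintro (⟨ℓ, h, -⟩ | ⟨-, ⟨v, hvI, hvN⟩, hUE⟩)
    · exact absurd ⟨ℓ, h⟩ hNs
    · rw [uset_union_eset] at hUE
      exact ⟨⟨v, hvI, hvN⟩, hUE.subset⟩
  · rintro ⟨⟨v, hvI, hvN⟩, hsup⟩
    refine Or.inr ⟨hNs, ⟨v, hvI, hvN⟩, ?_⟩
    rw [uset_union_eset]
    exact ⟨hsup, fun hsub => hvN.not_subset (hsub hvI)⟩

theorem innerSet_subset_of_nontrivial (hN : N.Nontrivial) (hNM : N ⊆ M) :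
    innerSet Cl CI N ⊆ innerSet Cl CI M := by
  intro I hI
  obtain ⟨⟨v, hvI, hvN⟩, hsup⟩ := (mem_innerSet_iff hN).1 hI
  exact (mem_innerSet_iff (hN.mono hNM)).2
    ⟨⟨v, hvI, hvN.trans_subset hNM⟩, fun w hw => hsup w (hNM.trans hw)⟩

theorem innerSet_singleton_subset (hℓ : ℓ ∈ M) (hm : m ∈ M)
    (hleaf : ¬ leafC Cl ℓ ⊆ leafC Cl m) (hcompat : ∀ v ∈ leafC Cl ℓ, Compatible Cl v M) :
    innerSet Cl CI {ℓ} ⊆ innerSet Cl CI M := by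
  intro I hI
  rw [mem_innerSet_singleton] at hI
  have hℓm : ℓ ≠ m := fun h => hleaf (h ▸ Subset.rfl)
  obtain ⟨v, hvℓ, hvm⟩ := not_subset.1 hleaf
  have hvM : Cl v ⊂ M := (hcompat v hvℓ).ssubset ⟨ℓ, hvℓ, hℓ⟩ fun h => hvm (h hm)
  rw [mem_innerSet_iff ⟨ℓ, hℓ, m, hm, hℓm⟩, hI]
  exact ⟨⟨v, hvℓ, hvM⟩, fun w hw => hw hℓ⟩

end

theorem stmt0_general (Cl : W → Set Λ) (CI : ι → Set W)
    (hleaf : ∀ ℓ ℓ' : Λ, ℓ ≠ ℓ' → ¬ leafC Cl ℓ ⊆ leafC Cl ℓ')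
    (N M : Set Λ) (hNne : N.Nonempty) (hNM : N ⊂ M)
    (hcompat : (∃ ℓ, N = {ℓ}) → ∀ v, Compatible Cl v M) :
    innerSet Cl CI N ⊆ innerSet Cl CI M := by
  obtain ⟨ℓ, rfl⟩ | hN := hNne.exists_eq_singleton_or_nontrivial
  · obtain ⟨m, hmM, hmℓ⟩ := exists_of_ssubset hNM
    exact innerSet_singleton_subset (hNM.subset rfl) hmM (hleaf ℓ m (Ne.symm hmℓ))
      fun v _ => hcompat ⟨ℓ, rfl⟩ v
  · exact innerSet_subset_of_nontrivial hN hNM.subset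

theorem stmt0 [Fintype Λ] [Fintype W] [Fintype ι]
    (Cl : W → Set Λ) (CI : ι → Set W)
    (hCl : ∀ v, (Cl v).Nonempty)
    (hleaf : ∀ ℓ ℓ' : Λ, ℓ ≠ ℓ' → ¬ leafC Cl ℓ ⊆ leafC Cl ℓ')
    (hCI : ∀ I, (CI I).Nonempty)
    (hHelly : ∀ I, (⋂ v ∈ CI I, Cl v).Nonempty)
    (N M : Set Λ) (hNne : N.Nonempty) (hMne : M.Nonempty)
    (hNM : N ⊂ M)
    (hcompat : (∃ ℓ, N = {ℓ}) → ∀ v, Compatible Cl v M) :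
    innerSet Cl CI N ⊆ innerSet Cl CI M :=
  stmt0_general Cl CI hleaf N M hNne hNM hcompat
end

section
/- Let N and M be disjoint nodes. Then inner(N) ∩ inner(M) = ∅. -/
open Set

variable {Λ W ι : Type*}

/-! The Helly condition gives every component a leaf common to all its vertices. If the component
is inner to a node `K`, all such leaves lie in `K`: when `K` is not a singleton because some vertex
of the component has its `Cl`-set inside `K`, and when `K = {ℓ}` because a common leaf `p` satisfies
`C(ℓ) ⊆ C(p)`, which forces `p = ℓ`. Disjoint nodes cannot share such a leaf. -/

section CommonLeaves

variable {Cl : W → Set Λ} {CI : ι → Set W}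

theorem mem_biInter_iff_subset_leafC {S : Set W} {ℓ : Λ} :
    ℓ ∈ ⋂ v ∈ S, Cl v ↔ S ⊆ leafC Cl ℓ :=
  mem_iInter₂

theorem biInter_leafC_subset_singleton {ℓ : Λ}
    (hleaf : ∀ ℓ', ℓ ≠ ℓ' → ¬ leafC Cl ℓ ⊆ leafC Cl ℓ') :
    ⋂ v ∈ leafC Cl ℓ, Cl v ⊆ {ℓ} := by
  intro p hp
  by_contra hne
  exact hleaf p (Ne.symm hne) (mem_biInter_iff_subset_leafC.mp hp)

theorem biInter_subset_of_mem_innerSet {K : Set Λ} {I : ι}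
    (hleaf : ∀ ℓ ℓ' : Λ, ℓ ≠ ℓ' → ¬ leafC Cl ℓ ⊆ leafC Cl ℓ')
    (hI : I ∈ innerSet Cl CI K) : ⋂ v ∈ CI I, Cl v ⊆ K := by
  rcases hI with ⟨ℓ, rfl, hCI⟩ | ⟨-, ⟨v, hv, hvK⟩, -⟩
  · rw [hCI]
    exact biInter_leafC_subset_singleton (hleaf ℓ)
  · exact (biInter_subset_of_mem hv).trans hvK.subset

theorem stmt1_general {N M : Set Λ}
    (hleaf : ∀ ℓ ℓ' : Λ, ℓ ≠ ℓ' → ¬ leafC Cl ℓ ⊆ leafC Cl ℓ')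
    (hHelly : ∀ I, (⋂ v ∈ CI I, Cl v).Nonempty) (hdisj : Disjoint N M) :
    Disjoint (innerSet Cl CI N) (innerSet Cl CI M) := by
  refine disjoint_left.mpr fun I hN hM => ?_
  obtain ⟨p, hp⟩ := hHelly I
  have hpN : p ∈ N := biInter_subset_of_mem_innerSet hleaf hN hp
  have hpM : p ∈ M := biInter_subset_of_mem_innerSet hleaf hM hp
  exact disjoint_left.mp hdisj hpN hpM

end CommonLeaves

theorem stmt1 [Fintype Λ] [Fintype W] [Fintype ι]
    (Cl : W → Set Λ) (CI : ι → Set W)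
    (hCl : ∀ v, (Cl v).Nonempty)
    (hleaf : ∀ ℓ ℓ' : Λ, ℓ ≠ ℓ' → ¬ leafC Cl ℓ ⊆ leafC Cl ℓ')
    (hCI : ∀ I, (CI I).Nonempty)
    (hHelly : ∀ I, (⋂ v ∈ CI I, Cl v).Nonempty)
    (N M : Set Λ) (hNne : N.Nonempty) (hMne : M.Nonempty)
    (hdisj : N ∩ M = ∅) :
    innerSet Cl CI N ∩ innerSet Cl CI M = ∅ :=
  (stmt1_general hleaf hHelly (disjoint_iff_inter_eq_empty.mpr hdisj)).inter_eq
end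

section
/- Let M be a node and let N_1, N_2 ⊊ M be disjoint nodes. Then (middle_M(N_1) ∪ inner(N_1)) ∩ (middle_M(N_2) ∪ inner(N_2)) = ∅. -/
open Set

variable {Λ W ι : Type*}

/-! By the Helly condition the vertices of a component `I` have a common leaf. If `I` is in
`inner(N)` or `middle_M(N)`, every common leaf `p` lies in `N`: either some vertex of `C(I)` has its
`Cl`-set inside `N`, or `N = {ℓ}` and `C(I) = C(ℓ)`, in which case `C(ℓ) ⊆ C(p)` and incomparability
forces `p = ℓ`. A component counted for both `N₁` and `N₂` would therefore give a point of
`N₁ ∩ N₂`. -/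

/-- The leaves lying in `Cl(v)` for every `v ∈ C`; the Helly condition on a component `I` says that
`C(I)` has a common leaf. For `C = ∅` this is the set of all leaves. -/
def commonLeaves (Cl : W → Set Λ) (C : Set W) : Set Λ := ⋂ v ∈ C, Cl v

section

variable {Cl : W → Set Λ}

theorem mem_commonLeaves_iff_subset_leafC {C : Set W} {ℓ : Λ} :
    ℓ ∈ commonLeaves Cl C ↔ C ⊆ leafC Cl ℓ :=
  mem_iInter₂

theorem commonLeaves_leafC_eq_singleton {ℓ : Λ}
    (hleaf : ∀ ℓ', ℓ ≠ ℓ' → ¬ leafC Cl ℓ ⊆ leafC Cl ℓ') :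
    commonLeaves Cl (leafC Cl ℓ) = {ℓ} := by
  ext p
  rw [mem_commonLeaves_iff_subset_leafC, mem_singleton_iff]
  refine ⟨fun hsub => ?_, fun hp => hp ▸ Subset.rfl⟩
  by_contra hne
  exact hleaf p (Ne.symm hne) hsub

theorem commonLeaves_subset_of_inter_Vset_nonempty {C : Set W} {N : Set Λ}
    (h : (C ∩ Vset Cl N).Nonempty) : commonLeaves Cl C ⊆ N := by
  obtain ⟨v, hvC, hvN⟩ := h
  exact (biInter_subset_of_mem hvC).trans hvN

theorem Iset_subset_Vset (N : Set Λ) : Iset Cl N ⊆ Vset Cl N :=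
  fun _ hv => hv.1

variable {CI : ι → Set W} {I : ι} {N : Set Λ}

theorem commonLeaves_subset_of_mem_innerSet
    (hleaf : ∀ ℓ ℓ' : Λ, ℓ ≠ ℓ' → ¬ leafC Cl ℓ ⊆ leafC Cl ℓ')
    (hI : I ∈ innerSet Cl CI N) : commonLeaves Cl (CI I) ⊆ N := by
  rcases hI with ⟨ℓ, rfl, hC⟩ | ⟨-, hmeet, -⟩
  · rw [hC, commonLeaves_leafC_eq_singleton (hleaf ℓ)]
  · exact commonLeaves_subset_of_inter_Vset_nonempty
      (hmeet.mono (inter_subset_inter_right _ (Iset_subset_Vset N)))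

theorem commonLeaves_subset_of_mem_middleSet {M : Set Λ}
    (hI : I ∈ middleSet Cl CI M N) : commonLeaves Cl (CI I) ⊆ N :=
  commonLeaves_subset_of_inter_Vset_nonempty hI.2.2

theorem commonLeaves_subset_of_mem_middleSet_union_innerSet {M : Set Λ}
    (hleaf : ∀ ℓ ℓ' : Λ, ℓ ≠ ℓ' → ¬ leafC Cl ℓ ⊆ leafC Cl ℓ')
    (hI : I ∈ middleSet Cl CI M N ∪ innerSet Cl CI N) : commonLeaves Cl (CI I) ⊆ N :=
  hI.elim commonLeaves_subset_of_mem_middleSet (commonLeaves_subset_of_mem_innerSet hleaf)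

end

theorem stmt2_general (Cl : W → Set Λ) (CI : ι → Set W)
    (hleaf : ∀ ℓ ℓ' : Λ, ℓ ≠ ℓ' → ¬ leafC Cl ℓ ⊆ leafC Cl ℓ')
    (hHelly : ∀ I, (⋂ v ∈ CI I, Cl v).Nonempty)
    (M₁ M₂ N₁ N₂ : Set Λ) (hdisj : N₁ ∩ N₂ = ∅) :
    (middleSet Cl CI M₁ N₁ ∪ innerSet Cl CI N₁) ∩
      (middleSet Cl CI M₂ N₂ ∪ innerSet Cl CI N₂) = ∅ := by
  rw [eq_empty_iff_forall_notMem]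
  rintro I ⟨hI₁, hI₂⟩
  have hsub : commonLeaves Cl (CI I) ⊆ N₁ ∩ N₂ :=
    subset_inter (commonLeaves_subset_of_mem_middleSet_union_innerSet hleaf hI₁)
      (commonLeaves_subset_of_mem_middleSet_union_innerSet hleaf hI₂)
  exact ((hHelly I).mono hsub).ne_empty hdisj

theorem stmt2 [Fintype Λ] [Fintype W] [Fintype ι]
    (Cl : W → Set Λ) (CI : ι → Set W)
    (hCl : ∀ v, (Cl v).Nonempty)
    (hleaf : ∀ ℓ ℓ' : Λ, ℓ ≠ ℓ' → ¬ leafC Cl ℓ ⊆ leafC Cl ℓ')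
    (hCI : ∀ I, (CI I).Nonempty)
    (hHelly : ∀ I, (⋂ v ∈ CI I, Cl v).Nonempty)
    (M N₁ N₂ : Set Λ) (hMne : M.Nonempty)
    (hN₁ne : N₁.Nonempty) (hN₂ne : N₂.Nonempty)
    (hN₁M : N₁ ⊂ M) (hN₂M : N₂ ⊂ M)
    (hdisj : N₁ ∩ N₂ = ∅) :
    (middleSet Cl CI M N₁ ∪ innerSet Cl CI N₁) ∩
      (middleSet Cl CI M N₂ ∪ innerSet Cl CI N₂) = ∅ := by
  exact stmt2_general Cl CI hleaf hHelly M M N₁ N₂ hdisj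
end

section
/- (P-node cross-incomparability.) Let M be a node partitioned into nodes N_1, …, N_k with k ≥ 2. Assume every vertex is compatible with M, that every vertex v with Cl(v) ⊊ M satisfies Cl(v) ⊆ N_i for some i ∈ [k], and that V(N_i) ≠ ∅ for every i. Then for all i ≠ j, all I ∈ middle_M(N_i) ∪ inner(N_i) and all J ∈ middle_M(N_j) ∪ inner(N_j), C(I) is not a subset of C(J). (Consequently, any chain with respect to an order refining inclusion of the sets C(·) meets at most one of these k sets.) -/
open Set

variable {Λ W ι : Type*}

/-!
Each component in `middle_M(N) ∪ inner(N)` contains a vertex `v` with `Cl v ⊆ N`. If `CI I ⊆ CI J`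
for components attached in this way to `N` and `N'`, then `CI J` contains such a vertex on either
side, and the common leaf of `CI J` given by the Helly condition lies in both `N` and `N'`.
-/

section CrossIncomparability

variable {Cl : W → Set Λ} {CI : ι → Set W}

theorem iset_subset_vset {N : Set Λ} : Iset Cl N ⊆ Vset Cl N :=
  fun v (hv : Cl v ⊂ N) ↦ hv.subset

theorem vset_singleton_subset_leafC (hCl : ∀ v, (Cl v).Nonempty) (ℓ : Λ) :
    Vset Cl {ℓ} ⊆ leafC Cl ℓ := by
  intro v hv
  have hClv : Cl v = {ℓ} := (hCl v).subset_singleton_iff.mp hv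
  exact hClv.superset (mem_singleton ℓ)

theorem inter_vset_nonempty_of_mem_innerSet (hCl : ∀ v, (Cl v).Nonempty) {N : Set Λ}
    (hN : (Vset Cl N).Nonempty) {I : ι} (hI : I ∈ innerSet Cl CI N) :
    (CI I ∩ Vset Cl N).Nonempty := by
  rcases hI with ⟨ℓ, rfl, hleaf⟩ | ⟨_, hinter, _⟩
  · rwa [hleaf, inter_eq_right.mpr (vset_singleton_subset_leafC hCl ℓ)]
  · exact hinter.mono (inter_subset_inter_right _ iset_subset_vset)

theorem inter_vset_nonempty_of_mem_middleSet_union_innerSet (hCl : ∀ v, (Cl v).Nonempty)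
    {M N : Set Λ} (hN : (Vset Cl N).Nonempty) {I : ι}
    (hI : I ∈ middleSet Cl CI M N ∪ innerSet Cl CI N) : (CI I ∩ Vset Cl N).Nonempty :=
  hI.elim (fun hmiddle ↦ hmiddle.2.2) (inter_vset_nonempty_of_mem_innerSet hCl hN)

theorem inter_nonempty_of_inter_vset_nonempty {C : Set W} {N N' : Set Λ}
    (hHelly : (⋂ v ∈ C, Cl v).Nonempty) (hN : (C ∩ Vset Cl N).Nonempty)
    (hN' : (C ∩ Vset Cl N').Nonempty) : (N ∩ N').Nonempty := by
  obtain ⟨ℓ, hℓ⟩ := hHelly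
  obtain ⟨v, hvC, hvN⟩ := hN
  obtain ⟨w, hwC, hwN'⟩ := hN'
  exact ⟨ℓ, hvN (mem_iInter₂.mp hℓ v hvC), hwN' (mem_iInter₂.mp hℓ w hwC)⟩

theorem stmt6_general (hCl : ∀ v, (Cl v).Nonempty) {M M' N N' : Set Λ} (hdisj : Disjoint N N')
    (hN : (Vset Cl N).Nonempty) (hN' : (Vset Cl N').Nonempty) {I J : ι}
    (hHelly : (⋂ v ∈ CI J, Cl v).Nonempty)
    (hI : I ∈ middleSet Cl CI M N ∪ innerSet Cl CI N)
    (hJ : J ∈ middleSet Cl CI M' N' ∪ innerSet Cl CI N') : ¬ CI I ⊆ CI J := by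
  intro hsub
  have hJN : (CI J ∩ Vset Cl N).Nonempty :=
    (inter_vset_nonempty_of_mem_middleSet_union_innerSet hCl hN hI).mono
      (inter_subset_inter_left _ hsub)
  have hJN' : (CI J ∩ Vset Cl N').Nonempty :=
    inter_vset_nonempty_of_mem_middleSet_union_innerSet hCl hN' hJ
  exact (inter_nonempty_of_inter_vset_nonempty hHelly hJN hJN').not_disjoint hdisj

end CrossIncomparability

theorem stmt6 [Fintype Λ] [Fintype W] [Fintype ι]
    (Cl : W → Set Λ) (CI : ι → Set W)
    (hCl : ∀ v, (Cl v).Nonempty)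
    (hleaf : ∀ ℓ ℓ' : Λ, ℓ ≠ ℓ' → ¬ leafC Cl ℓ ⊆ leafC Cl ℓ')
    (hCI : ∀ I, (CI I).Nonempty)
    (hHelly : ∀ I, (⋂ v ∈ CI I, Cl v).Nonempty)
    (M : Set Λ) (hMne : M.Nonempty)
    (k : ℕ) (hk : 2 ≤ k)
    (N : ℕ → Set Λ)
    (hNne : ∀ i ∈ Set.Icc 1 k, (N i).Nonempty)
    (hNdisj : ∀ i ∈ Set.Icc 1 k, ∀ j ∈ Set.Icc 1 k, i ≠ j → N i ∩ N j = ∅)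
    (hNunion : (⋃ i ∈ Set.Icc 1 k, N i) = M)
    (hcompat : ∀ v, Compatible Cl v M)
    (hP : ∀ v, Cl v ⊂ M → ∃ i ∈ Set.Icc 1 k, Cl v ⊆ N i)
    (hVne : ∀ i ∈ Set.Icc 1 k, (Vset Cl (N i)).Nonempty) :
    ∀ i ∈ Set.Icc 1 k, ∀ j ∈ Set.Icc 1 k, i ≠ j →
      ∀ I ∈ middleSet Cl CI M (N i) ∪ innerSet Cl CI (N i),
        ∀ J ∈ middleSet Cl CI M (N j) ∪ innerSet Cl CI (N j),
          ¬ CI I ⊆ CI J :=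
  fun i hi j hj hij _ hI J hJ ↦
    stmt6_general hCl (disjoint_iff_inter_eq_empty.mpr (hNdisj i hi j hj hij)) (hVne i hi)
      (hVne j hj) (hHelly J) hI hJ
end

section
/- Let Q ⊆ Λ be a node partitioned into nonempty nodes N_1, …, N_k with k ≥ 3; assume every vertex is compatible with each N_i, and assume there is a linear order on Λ in which every set Cl(v) (v ∈ W) is an interval, every N_i is an interval, and all elements of N_i precede all elements of N_{i+1} for each i < k. Then for every vertex v ∈ I(Q) ∖ ⋃_i V(N_i): (i) for each i ∈ [k], either N_i ⊆ Cl(v) or N_i ∩ Cl(v) = ∅; and (ii) J(v) := {i ∈ [k] : N_i ⊆ Cl(v)} is a nonempty subinterval of [k] with J(v) ≠ [k]. -/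
open Set

variable {Λ W ι : Type*}

/-!
A vertex `v` whose set `Cl v` lies in no block can only contain or avoid each block, so `Cl v` is a
union of blocks; it is nonempty and smaller than the union of all of them. If `N a` and `N c` lie in
`Cl v` and `a < b < c`, then every element of `N b` lies between an element of `N a` and one of
`N c`, hence in the interval `Cl v`. Elements of nonadjacent blocks are compared through elements of
the blocks between them.
-/

/-- The index set `J(v)` of the blocks `N i`, `i ∈ K`, that lie inside `Cl v`; the paper has
`K = [k]`. -/
def Jset (Cl : W → Set Λ) (N : ι → Set Λ) (K : Set ι) (v : W) : Set ι := {i | i ∈ K ∧ N i ⊆ Cl v}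

theorem Compatible.subset_or_inter_eq_empty {Cl : W → Set Λ} {v : W} {M : Set Λ}
    (h : Compatible Cl v M) (hv : v ∉ Vset Cl M) : M ⊆ Cl v ∨ M ∩ Cl v = ∅ :=
  (h.resolve_left hv).imp_right fun hdisj => (inter_comm M (Cl v)).trans hdisj

section Blocks

variable {Cl : W → Set Λ} {v : W} {N : ι → Set Λ} {K : Set ι}

theorem Jset_nonempty (hCl : (Cl v).Nonempty) (hv : v ∈ Vset Cl (⋃ i ∈ K, N i))
    (hN : ∀ i ∈ K, N i ⊆ Cl v ∨ N i ∩ Cl v = ∅) : (Jset Cl N K v).Nonempty := by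
  obtain ⟨x, hx⟩ := hCl
  obtain ⟨i, hi, hxi⟩ := mem_iUnion₂.1 (hv hx)
  have hmeets : (N i ∩ Cl v).Nonempty := ⟨x, hxi, hx⟩
  exact ⟨i, hi, (hN i hi).resolve_right hmeets.ne_empty⟩

theorem Jset_ne_of_mem_Iset (hv : v ∈ Iset Cl (⋃ i ∈ K, N i)) : Jset Cl N K v ≠ K := fun h =>
  hv.2 <| iUnion₂_subset fun i hi =>
    have hiJ : i ∈ Jset Cl N K v := h.ge hi
    hiJ.2

end Blocks

section Order

variable [Preorder Λ]

theorem subset_upperBounds_trans {A B C : Set Λ} (hB : B.Nonempty) (hAB : B ⊆ upperBounds A)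
    (hBC : C ⊆ upperBounds B) : C ⊆ upperBounds A := by
  obtain ⟨b, hb⟩ := hB
  exact fun c hc a ha => (hAB hb ha).trans (hBC hc hb)

theorem subset_of_ordConnected_of_subset_upperBounds {A B C S : Set Λ} (hS : S.OrdConnected)
    (hAB : B ⊆ upperBounds A) (hBC : C ⊆ upperBounds B) (hA : (A ∩ S).Nonempty)
    (hC : (C ∩ S).Nonempty) : B ⊆ S := by
  obtain ⟨a, haA, haS⟩ := hA
  obtain ⟨c, hcC, hcS⟩ := hC
  exact fun b hb => hS.out haS hcS ⟨hAB hb haA, hBC hcC hb⟩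

variable {N : ι → Set Λ} {K : Set ι}

theorem subset_upperBounds_of_lt [Preorder ι] [LocallyFiniteOrder ι] (hK : K.OrdConnected)
    (hne : ∀ i ∈ K, (N i).Nonempty)
    (hN : ∀ i ∈ K, ∀ j ∈ K, i ⋖ j → N j ⊆ upperBounds (N i)) {i j : ι}
    (hi : i ∈ K) (hj : j ∈ K) (hij : i < j) : N j ⊆ upperBounds (N i) := by
  induction transGen_covBy_of_lt hij with
  | single hcov => exact hN i hi _ hj hcov
  | tail hchain hcov ih =>
    have hlt := lt_iff_transGen_covBy.2 hchain
    have hmid := hK.out hi hj ⟨hlt.le, hcov.le⟩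
    exact subset_upperBounds_trans (hne _ hmid) (ih hmid hlt) (hN _ hmid _ hj hcov)

variable [PartialOrder ι] [LocallyFiniteOrder ι]

theorem Jset_ordConnected {Cl : W → Set Λ} {v : W} (hCl : (Cl v).OrdConnected)
    (hK : K.OrdConnected) (hne : ∀ i ∈ K, (N i).Nonempty)
    (hN : ∀ i ∈ K, ∀ j ∈ K, i ⋖ j → N j ⊆ upperBounds (N i)) : (Jset Cl N K v).OrdConnected := by
  have hmeets : ∀ i ∈ Jset Cl N K v, (N i ∩ Cl v).Nonempty := fun i hi =>
    (hne i hi.1).mono (subset_inter subset_rfl hi.2)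
  refine ⟨fun a ha c hc b hb => ?_⟩
  have hbK : b ∈ K := hK.out ha.1 hc.1 hb
  rcases hb.1.eq_or_lt with rfl | hab
  · exact ha
  rcases hb.2.eq_or_lt with rfl | hbc
  · exact hc
  exact ⟨hbK, subset_of_ordConnected_of_subset_upperBounds hCl
    (subset_upperBounds_of_lt hK hne hN ha.1 hbK hab)
    (subset_upperBounds_of_lt hK hne hN hbK hc.1 hbc) (hmeets a ha) (hmeets c hc)⟩

theorem stmt7_general {Cl : W → Set Λ} {v : W} (hCl : (Cl v).Nonempty)
    (hClconv : (Cl v).OrdConnected) (hK : K.OrdConnected) (hne : ∀ i ∈ K, (N i).Nonempty)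
    (hcompat : ∀ i ∈ K, Compatible Cl v (N i))
    (hN : ∀ i ∈ K, ∀ j ∈ K, i ⋖ j → N j ⊆ upperBounds (N i))
    (hv : v ∈ Iset Cl (⋃ i ∈ K, N i) \ ⋃ i ∈ K, Vset Cl (N i)) :
    (∀ i ∈ K, N i ⊆ Cl v ∨ N i ∩ Cl v = ∅) ∧
    (Jset Cl N K v).Nonempty ∧ (Jset Cl N K v).OrdConnected ∧ Jset Cl N K v ≠ K := by
  have hsplit : ∀ i ∈ K, N i ⊆ Cl v ∨ N i ∩ Cl v = ∅ := fun i hi =>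
    (hcompat i hi).subset_or_inter_eq_empty fun hvi => hv.2 (mem_biUnion hi hvi)
  exact ⟨hsplit, Jset_nonempty hCl hv.1.1 hsplit, Jset_ordConnected hClconv hK hne hN,
    Jset_ne_of_mem_Iset hv.1⟩

end Order

theorem stmt7 [Fintype Λ] [Fintype W]
    (Cl : W → Set Λ)
    (hCl : ∀ v, (Cl v).Nonempty)
    (Q : Set Λ) (hQne : Q.Nonempty)
    (k : ℕ) (hk : 3 ≤ k)
    (N : ℕ → Set Λ)
    (hNne : ∀ i ∈ Set.Icc 1 k, (N i).Nonempty)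
    (hNdisj : ∀ i ∈ Set.Icc 1 k, ∀ j ∈ Set.Icc 1 k, i ≠ j → N i ∩ N j = ∅)
    (hNunion : (⋃ i ∈ Set.Icc 1 k, N i) = Q)
    (hcompatN : ∀ v, ∀ i ∈ Set.Icc 1 k, Compatible Cl v (N i))
    -- a linear order on Λ …
    (le : Λ → Λ → Prop) (hlin : IsLinearOrder Λ le)
    -- … in which every set Cl(v) is an interval,
    (hClconv : ∀ v, ∀ a b c : Λ, le a b → le b c → a ∈ Cl v → c ∈ Cl v → b ∈ Cl v)
    -- every N_i is an interval,
    (hNconv : ∀ i ∈ Set.Icc 1 k, ∀ a b c : Λ,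
        le a b → le b c → a ∈ N i → c ∈ N i → b ∈ N i)
    -- and all elements of N_i strictly precede all elements of N_{i+1}:
    (hNorder : ∀ i, 1 ≤ i → i < k → ∀ a ∈ N i, ∀ b ∈ N (i + 1), le a b ∧ a ≠ b)
    (v : W) (hv : v ∈ Iset Cl Q \ ⋃ i ∈ Set.Icc 1 k, Vset Cl (N i)) :
    -- (i) each N_i is inside Cl(v) or disjoint from it;
    (∀ i ∈ Set.Icc 1 k, N i ⊆ Cl v ∨ N i ∩ Cl v = ∅) ∧
    -- (ii) J(v) = {i ∈ [k] : N_i ⊆ Cl v} is a nonempty subinterval of [k], ≠ [k]: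
    ({i | i ∈ Set.Icc 1 k ∧ N i ⊆ Cl v}).Nonempty ∧
    (∀ a b c : ℕ, a ≤ b → b ≤ c →
        a ∈ {i | i ∈ Set.Icc 1 k ∧ N i ⊆ Cl v} →
        c ∈ {i | i ∈ Set.Icc 1 k ∧ N i ⊆ Cl v} →
        b ∈ {i | i ∈ Set.Icc 1 k ∧ N i ⊆ Cl v}) ∧
    {i | i ∈ Set.Icc 1 k ∧ N i ⊆ Cl v} ≠ Set.Icc 1 k := by
  subst hNunion
  let _ : Preorder Λ := { le := le, le_refl := hlin.refl, le_trans := hlin.trans }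
  have hconv : (Cl v).OrdConnected := ⟨fun a ha c hc b hb => hClconv v a b c hb.1 hb.2 ha hc⟩
  have hcov : ∀ i ∈ Icc 1 k, ∀ j ∈ Icc 1 k, i ⋖ j → N j ⊆ upperBounds (N i) := by
    rintro i hi j hj hij b hb a ha
    obtain rfl := Order.covBy_iff_add_one_eq.1 hij
    exact (hNorder i hi.1 hj.2 a ha b hb).1
  obtain ⟨hsplit, hJne, hJconv, hJproper⟩ :=
    stmt7_general (hCl v) hconv ordConnected_Icc hNne (hcompatN v) hcov hv
  exact ⟨hsplit, hJne, fun a b c hab hbc ha hc => hJconv.out ha hc ⟨hab, hbc⟩, hJproper⟩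
end

section
/- Let I ∈ rest(Q). Then U(Q) ∪ E(Q) ⊊ C(I) ⊆ U(Q) ∪ E(Q) ∪ I'(Q); in particular C(I) ∩ I'(Q) ≠ ∅. Moreover J(I) := ⋂_{v ∈ C(I) ∩ I'(Q)} J(v) is a nonempty subinterval of [k] with J(I) ≠ [1, k]. -/
open Set

variable {Λ W ι : Type*}

/-- `J(v) = {i ∈ [k] : N_i ⊆ Cl(v)}`. -/
def Jnat (Cl : W → Set Λ) (N : ℕ → Set Λ) (k : ℕ) (v : W) : Set ℕ :=
  {i | i ∈ Set.Icc 1 k ∧ N i ⊆ Cl v}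

/-- `I'(Q) = I(Q) \ ⋃ᵢ V(Nᵢ)`. -/
def IprimeQ (Cl : W → Set Λ) (Q : Set Λ) (N : ℕ → Set Λ) (k : ℕ) : Set W :=
  Iset Cl Q \ ⋃ i ∈ Set.Icc 1 k, Vset Cl (N i)

/-- `rest(Q) = inner(Q) \ ⋃ᵢ (middle_Q(Nᵢ) ∪ inner(Nᵢ))`. -/
def restQ (Cl : W → Set Λ) (CI : ι → Set W) (Q : Set Λ) (N : ℕ → Set Λ) (k : ℕ) : Set ι :=
  innerSet Cl CI Q \
    ⋃ i ∈ Set.Icc 1 k, (middleSet Cl CI Q (N i) ∪ innerSet Cl CI (N i))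

/-- `J(I) = ⋂_{v ∈ C(I) ∩ I'(Q)} J(v)`. -/
def JIset (Cl : W → Set Λ) (CI : ι → Set W) (Q : Set Λ) (N : ℕ → Set Λ) (k : ℕ)
    (I : ι) : Set ℕ :=
  ⋂ v ∈ CI I ∩ IprimeQ Cl Q N k, Jnat Cl N k v

/-- A set of naturals is an interval (order-convex). -/
def IsIntervalIn (s : Set ℕ) : Prop :=
  ∀ a b c : ℕ, a ≤ b → b ≤ c → a ∈ s → c ∈ s → b ∈ s

/-- `j₁`, the left endpoint of `J(I)`. -/
noncomputable def jLo (Cl : W → Set Λ) (CI : ι → Set W) (Q : Set Λ) (N : ℕ → Set Λ)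
    (k : ℕ) (I : ι) : ℕ :=
  sInf (JIset Cl CI Q N k I)

/-- `j₂`, the right endpoint of `J(I)`. -/
noncomputable def jHi (Cl : W → Set Λ) (CI : ι → Set W) (Q : Set Λ) (N : ℕ → Set Λ)
    (k : ℕ) (I : ι) : ℕ :=
  sSup (JIset Cl CI Q N k I)

/-- `I ∈ rest(Q)` with `J(I) = [j₁, j₂]` is discarded if there are
`v, v' ∈ I'(Q) ∖ C(I)` with `{j₁−1, j₁} ⊆ J(v)` and `{j₂, j₂+1} ⊆ J(v')`. -/
def Discarded (Cl : W → Set Λ) (CI : ι → Set W) (Q : Set Λ) (N : ℕ → Set Λ)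
    (k : ℕ) (I : ι) : Prop :=
  (∃ v ∈ IprimeQ Cl Q N k \ CI I,
      jLo Cl CI Q N k I - 1 ∈ Jnat Cl N k v ∧ jLo Cl CI Q N k I ∈ Jnat Cl N k v) ∧
  (∃ v ∈ IprimeQ Cl Q N k \ CI I,
      jHi Cl CI Q N k I ∈ Jnat Cl N k v ∧ jHi Cl CI Q N k I + 1 ∈ Jnat Cl N k v)

/-- `outer(Nᵢ)`: the non-discarded components of `rest(Q)` assigned to `Nᵢ`. -/
def outerSet (Cl : W → Set Λ) (CI : ι → Set W) (Q : Set Λ) (N : ℕ → Set Λ)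
    (k : ℕ) (i : ℕ) : Set ι :=
  {I | I ∈ restQ Cl CI Q N k ∧ ¬ Discarded Cl CI Q N k I ∧
    ((jLo Cl CI Q N k I = jHi Cl CI Q N k I ∧ i = jLo Cl CI Q N k I) ∨
     (jLo Cl CI Q N k I < jHi Cl CI Q N k I ∧ i = jLo Cl CI Q N k I ∧
       ¬ ∃ v ∈ IprimeQ Cl Q N k \ CI I,
           jLo Cl CI Q N k I - 1 ∈ Jnat Cl N k v ∧
           jLo Cl CI Q N k I ∈ Jnat Cl N k v) ∨
     (jLo Cl CI Q N k I < jHi Cl CI Q N k I ∧ i = jHi Cl CI Q N k I ∧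
       ¬ ∃ v ∈ IprimeQ Cl Q N k \ CI I,
           jHi Cl CI Q N k I ∈ Jnat Cl N k v ∧
           jHi Cl CI Q N k I + 1 ∈ Jnat Cl N k v))}

/-- `comp(Nᵢ) = middle_Q(Nᵢ) ∪ inner(Nᵢ) ∪ outer(Nᵢ)`. -/
def compSet (Cl : W → Set Λ) (CI : ι → Set W) (Q : Set Λ) (N : ℕ → Set Λ)
    (k : ℕ) (i : ℕ) : Set ι :=
  middleSet Cl CI Q (N i) ∪ innerSet Cl CI (N i) ∪ outerSet Cl CI Q N k i

/-- The relation `⊑_Q` on (indices of) children of the Q-node: for `a < b`,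
`N_a ⊑_Q N_b` iff some `v ∈ I'(Q)` has `a ∉ J(v)` and `{b, b+1} ⊆ J(v)`; for
`b < a`, `N_a ⊑_Q N_b` iff some `v ∈ I'(Q)` has `{b−1, b} ⊆ J(v)` and `a ∉ J(v)`. -/
def sqQN (Cl : W → Set Λ) (Q : Set Λ) (N : ℕ → Set Λ) (k : ℕ) (a b : ℕ) : Prop :=
  (a < b ∧ ∃ v ∈ IprimeQ Cl Q N k,
      a ∉ Jnat Cl N k v ∧ b ∈ Jnat Cl N k v ∧ b + 1 ∈ Jnat Cl N k v) ∨
  (b < a ∧ ∃ v ∈ IprimeQ Cl Q N k,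
      b - 1 ∈ Jnat Cl N k v ∧ b ∈ Jnat Cl N k v ∧ a ∉ Jnat Cl N k v)

/-!
For `I ∈ rest(Q)`, the set `C(I)` contains no vertex of any `V(Nᵢ)`: such a vertex would place `I`
in `middle_Q(Nᵢ)` or in `inner(Nᵢ)`. Hence `C(I)` meets `I(Q)` only inside `I'(Q)`. A leaf `ℓ`
common to all `Cl(v)`, `v ∈ C(I)`, lies in `Q`, so compatibility with `Q` puts the vertices of
`C(I)` outside `I(Q)` into `U(Q) ∪ E(Q)`. If `ℓ ∈ Nᵢ`, compatibility with `Nᵢ` gives `i ∈ J(v)` for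
all `v ∈ C(I) ∩ I'(Q)`, so `i ∈ J(I)`. Finally `J(I) = [1, k]` would force `Q ⊆ Cl(v)` for some
`v ∈ I(Q)`.
-/

theorem nontrivial_biUnion_of_pairwiseDisjoint {α κ : Type*} {S : Set κ} {f : κ → Set α}
    (hS : S.Nontrivial) (hne : ∀ i ∈ S, (f i).Nonempty) (hdisj : S.PairwiseDisjoint f) :
    (⋃ i ∈ S, f i).Nontrivial := by
  obtain ⟨i, hi, j, hj, hij⟩ := hS
  obtain ⟨a, ha⟩ := hne i hi
  obtain ⟨b, hb⟩ := hne j hj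
  exact ⟨a, mem_biUnion hi ha, b, mem_biUnion hj hb, (hdisj hi hj hij).ne_of_mem ha hb⟩

theorem isIntervalIn_iff_ordConnected {s : Set ℕ} : IsIntervalIn s ↔ s.OrdConnected := by
  refine ⟨fun h => ⟨fun a ha c hc b hb => h a b c hb.1 hb.2 ha hc⟩, ?_⟩
  exact fun h a b c hab hbc ha hc => h.out ha hc ⟨hab, hbc⟩

section

variable {Cl : W → Set Λ} {CI : ι → Set W} {M Q : Set Λ} {N : ℕ → Set Λ} {k i : ℕ}
  {I : ι} {v : W} {ℓ : Λ}

theorem Compatible.subset_or_superset_of_mem (h : Compatible Cl v M) (hv : ℓ ∈ Cl v)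
    (hM : ℓ ∈ M) : Cl v ⊆ M ∨ M ⊆ Cl v := by
  rcases h with h | h | h
  · exact Or.inl h
  · exact Or.inr h
  · exact absurd h (Nonempty.ne_empty ⟨ℓ, hv, hM⟩)

theorem Compatible.mem_uset_union_eset_union_iset (h : Compatible Cl v M) (hv : ℓ ∈ Cl v)
    (hM : ℓ ∈ M) : v ∈ Uset Cl M ∪ Eset Cl M ∪ Iset Cl M := by
  rcases eq_or_ne (Cl v) M with heq | hne
  · exact Or.inl (Or.inl heq)
  rcases h.subset_or_superset_of_mem hv hM with hsub | hsup
  · exact Or.inr (hsub.ssubset_of_ne hne)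
  · exact Or.inl (Or.inr (hsup.ssubset_of_ne hne.symm))

theorem mem_innerSet_iff_of_nontrivial (hM : M.Nontrivial) :
    I ∈ innerSet Cl CI M ↔
      (CI I ∩ Iset Cl M).Nonempty ∧ Uset Cl M ∪ Eset Cl M ⊂ CI I := by
  have hsingleton : ¬ ∃ ℓ, M = {ℓ} := fun ⟨_, hℓ⟩ => hM.ne_singleton hℓ
  refine ⟨?_, fun h => Or.inr ⟨hsingleton, h⟩⟩
  rintro (⟨ℓ, hℓ, -⟩ | ⟨-, h⟩)
  · exact absurd ⟨ℓ, hℓ⟩ hsingleton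
  · exact h

theorem not_subset_of_mem_restQ (hI : I ∈ restQ Cl CI Q N k) (hv : v ∈ CI I)
    (hi : i ∈ Icc 1 k) : ¬ Cl v ⊆ N i := by
  intro hvi
  refine hI.2 (mem_biUnion hi ?_)
  by_cases hinner : I ∈ innerSet Cl CI (N i)
  · exact Or.inr hinner
  · exact Or.inl ⟨hI.1, hinner, v, hv, hvi⟩

theorem inter_iprimeQ_eq_inter_iset (hI : I ∈ restQ Cl CI Q N k) :
    CI I ∩ IprimeQ Cl Q N k = CI I ∩ Iset Cl Q := by
  refine Subset.antisymm (inter_subset_inter_right _ sdiff_subset) ?_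
  rintro v ⟨hv, hvQ⟩
  refine ⟨hv, hvQ, fun hmem => ?_⟩
  obtain ⟨i, hi, hvi⟩ := mem_iUnion₂.mp hmem
  exact not_subset_of_mem_restQ hI hv hi hvi

theorem subset_of_mem_restQ (hI : I ∈ restQ Cl CI Q N k) (hℓ : ℓ ∈ ⋂ v ∈ CI I, Cl v)
    (hℓQ : ℓ ∈ Q) (hcompat : ∀ v ∈ CI I, Compatible Cl v Q) :
    CI I ⊆ Uset Cl Q ∪ Eset Cl Q ∪ IprimeQ Cl Q N k := by
  intro v hv
  have hvℓ : ℓ ∈ Cl v := mem_iInter₂.mp hℓ v hv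
  rcases (hcompat v hv).mem_uset_union_eset_union_iset hvℓ hℓQ with hUE | hvQ
  · exact Or.inl hUE
  · have hv' : v ∈ CI I ∩ IprimeQ Cl Q N k := inter_iprimeQ_eq_inter_iset hI ▸ ⟨hv, hvQ⟩
    exact Or.inr hv'.2

theorem mem_jnat_of_mem_iprimeQ (hv : v ∈ IprimeQ Cl Q N k) (hi : i ∈ Icc 1 k)
    (hcompat : Compatible Cl v (N i)) (hℓv : ℓ ∈ Cl v) (hℓi : ℓ ∈ N i) :
    i ∈ Jnat Cl N k v :=
  ⟨hi, (hcompat.subset_or_superset_of_mem hℓv hℓi).resolve_left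
    fun hvi => hv.2 (mem_biUnion hi hvi)⟩

theorem jIset_nonempty (hℓ : ℓ ∈ ⋂ v ∈ CI I, Cl v) (hℓN : ℓ ∈ ⋃ i ∈ Icc 1 k, N i)
    (hcompat : ∀ v ∈ CI I, ∀ i ∈ Icc 1 k, Compatible Cl v (N i)) :
    (JIset Cl CI Q N k I).Nonempty := by
  obtain ⟨i, hi, hℓi⟩ := mem_iUnion₂.mp hℓN
  refine ⟨i, mem_iInter₂.mpr fun v ⟨hv, hv'⟩ => ?_⟩
  exact mem_jnat_of_mem_iprimeQ hv' hi (hcompat v hv i hi) (mem_iInter₂.mp hℓ v hv) hℓi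

theorem isIntervalIn_jIset
    (hJ : ∀ v ∈ CI I ∩ IprimeQ Cl Q N k, IsIntervalIn (Jnat Cl N k v)) :
    IsIntervalIn (JIset Cl CI Q N k I) :=
  isIntervalIn_iff_ordConnected.mpr <|
    ordConnected_biInter fun v hv => isIntervalIn_iff_ordConnected.mp (hJ v hv)

theorem jnat_ssubset_Icc (hv : ¬ ⋃ i ∈ Icc 1 k, N i ⊆ Cl v) : Jnat Cl N k v ⊂ Icc 1 k :=
  ⟨fun _ hi => hi.1, fun h => hv (iUnion₂_subset fun _ hi => (h hi).2)⟩

theorem jIset_ssubset_Icc (hcover : Q ⊆ ⋃ i ∈ Icc 1 k, N i)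
    (hne : (CI I ∩ IprimeQ Cl Q N k).Nonempty) : JIset Cl CI Q N k I ⊂ Icc 1 k := by
  obtain ⟨v, hv⟩ := hne
  have hvQ : ¬ Q ⊆ Cl v := hv.2.1.2
  calc JIset Cl CI Q N k I
      ⊆ Jnat Cl N k v := biInter_subset_of_mem hv
    _ ⊂ Icc 1 k := jnat_ssubset_Icc fun h => hvQ (hcover.trans h)

theorem stmt10_general (hQ : Q.Nontrivial) (hcover : Q ⊆ ⋃ i ∈ Icc 1 k, N i)
    (hI : I ∈ restQ Cl CI Q N k) (hHelly : (⋂ v ∈ CI I, Cl v).Nonempty)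
    (hcompatQ : ∀ v ∈ CI I, Compatible Cl v Q)
    (hcompatN : ∀ v ∈ CI I, ∀ i ∈ Icc 1 k, Compatible Cl v (N i))
    (hJint : ∀ v ∈ CI I ∩ IprimeQ Cl Q N k, IsIntervalIn (Jnat Cl N k v)) :
    Uset Cl Q ∪ Eset Cl Q ⊂ CI I ∧
    CI I ⊆ Uset Cl Q ∪ Eset Cl Q ∪ IprimeQ Cl Q N k ∧
    (CI I ∩ IprimeQ Cl Q N k).Nonempty ∧
    (JIset Cl CI Q N k I).Nonempty ∧
    IsIntervalIn (JIset Cl CI Q N k I) ∧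
    JIset Cl CI Q N k I ⊆ Icc 1 k ∧
    JIset Cl CI Q N k I ≠ Icc 1 k := by
  obtain ⟨hmeet, hssub⟩ := (mem_innerSet_iff_of_nontrivial hQ).mp hI.1
  obtain ⟨ℓ, hℓ⟩ := hHelly
  have hℓQ : ℓ ∈ Q := by
    obtain ⟨v, hv, hvQ⟩ := hmeet
    exact hvQ.1 (mem_iInter₂.mp hℓ v hv)
  have hmeet' : (CI I ∩ IprimeQ Cl Q N k).Nonempty := inter_iprimeQ_eq_inter_iset hI ▸ hmeet
  have hJ : JIset Cl CI Q N k I ⊂ Icc 1 k := jIset_ssubset_Icc hcover hmeet'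
  exact ⟨hssub, subset_of_mem_restQ hI hℓ hℓQ hcompatQ, hmeet',
    jIset_nonempty hℓ (hcover hℓQ) hcompatN, isIntervalIn_jIset hJint, hJ.subset, hJ.ne⟩

end

theorem stmt10 [Fintype Λ] [Fintype W] [Fintype ι]
    (Cl : W → Set Λ) (CI : ι → Set W)
    (hCl : ∀ v, (Cl v).Nonempty)
    (hleaf : ∀ ℓ ℓ' : Λ, ℓ ≠ ℓ' → ¬ leafC Cl ℓ ⊆ leafC Cl ℓ')
    (hCI : ∀ I, (CI I).Nonempty)
    (hHelly : ∀ I, (⋂ v ∈ CI I, Cl v).Nonempty)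
    (Q : Set Λ) (hQne : Q.Nonempty)
    (k : ℕ) (hk : 3 ≤ k)
    (N : ℕ → Set Λ)
    (hNne : ∀ i ∈ Set.Icc 1 k, (N i).Nonempty)
    (hNdisj : ∀ i ∈ Set.Icc 1 k, ∀ j ∈ Set.Icc 1 k, i ≠ j → N i ∩ N j = ∅)
    (hNunion : (⋃ i ∈ Set.Icc 1 k, N i) = Q)
    (hcompatQ : ∀ v, Compatible Cl v Q)
    (hcompatN : ∀ v, ∀ i ∈ Set.Icc 1 k, Compatible Cl v (N i))
    (hJint : ∀ v ∈ IprimeQ Cl Q N k, IsIntervalIn (Jnat Cl N k v))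
    (I : ι) (hI : I ∈ restQ Cl CI Q N k) :
    Uset Cl Q ∪ Eset Cl Q ⊂ CI I ∧
    CI I ⊆ Uset Cl Q ∪ Eset Cl Q ∪ IprimeQ Cl Q N k ∧
    (CI I ∩ IprimeQ Cl Q N k).Nonempty ∧
    (JIset Cl CI Q N k I).Nonempty ∧
    IsIntervalIn (JIset Cl CI Q N k I) ∧
    JIset Cl CI Q N k I ⊆ Set.Icc 1 k ∧
    JIset Cl CI Q N k I ≠ Set.Icc 1 k := by
  have hQ : Q.Nontrivial := hNunion ▸ nontrivial_biUnion_of_pairwiseDisjoint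
    ⟨1, ⟨le_rfl, by omega⟩, 2, ⟨by omega, by omega⟩, by omega⟩ hNne
    fun i hi j hj hij => disjoint_iff_inter_eq_empty.mpr (hNdisj i hi j hj hij)
  exact stmt10_general hQ hNunion.ge hI (hHelly I) (fun v _ => hcompatQ v)
    (fun v _ => hcompatN v) (fun v hv => hJint v hv.2)
end

section
/- Let i ≠ j in [k], let I_1 ∈ comp(N_i) and I_2 ∈ comp(N_j) with I_1 ≠ I_2 and C(I_1) ⊆ C(I_2). Then N_i ⊑_Q N_j, N_j ⊑_Q N_i does not hold, and I_1 ∈ outer(N_i). -/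
open Set

variable {Λ W ι : Type*}

/-!
Call `ℓ` a common leaf of `I` when `C(I) ⊆ C(ℓ)`. Every common leaf of a component in
`middle_Q(N) ∪ inner(N)` lies in `N`, and `middle_Q(N) ∪ inner(N)` is closed under enlarging `C(I)`.
If `I₁` were in `middle_Q(Nᵢ) ∪ inner(Nᵢ)`, so would `I₂`, which is impossible since `I₂ ∈ comp(Nⱼ)`
and `Nᵢ ∩ Nⱼ = ∅`; hence `I₁ ∈ outer(Nᵢ)`.

Every `I ∈ comp(N_m)` has `m ∈ J(I)`, and `J` is antitone in `C(I)`, so `i, j ∈ J(I₁)`. A vertex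
witnessing `Nⱼ ⊑ Nᵢ` has `j ∉ J(v)`, so it lies outside `C(I₁)`, which the rule defining `outer(Nᵢ)`
forbids. As `J(I₁)` does not contain both `1` and `k`, property (Q) yields `Nᵢ ⊑ Nⱼ`.
-/

/-- Property (Q) of the ordered children `N₁, …, N_k` of the node `Q`: it makes `⊑_Q` total on the
pairs of children other than `{N₁, N_k}`. As `J(v) ⊆ [1, k]`, the out-of-range indices `j₁ - 1 = 0`
and `j₂ + 1 = k + 1` belong to no `J(v)`. -/
def PropertyQ (Cl : W → Set Λ) (Q : Set Λ) (N : ℕ → Set Λ) (k : ℕ) : Prop :=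
  ∀ j₁ j₂ : ℕ, 1 ≤ j₁ → j₁ < j₂ → j₂ ≤ k → (j₁, j₂) ≠ (1, k) →
    ∃ v ∈ IprimeQ Cl Q N k,
      (j₁ ∉ Jnat Cl N k v ∧ j₂ ∈ Jnat Cl N k v ∧ j₂ + 1 ∈ Jnat Cl N k v) ∨
      (j₁ - 1 ∈ Jnat Cl N k v ∧ j₁ ∈ Jnat Cl N k v ∧ j₂ ∉ Jnat Cl N k v)

section

variable {Cl : W → Set Λ} {CI : ι → Set W} {Q M : Set Λ} {N : ℕ → Set Λ} {k i j m : ℕ}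
  {I I₁ I₂ : ι} {ℓ : Λ} {v : W}

theorem subset_leafC_iff_mem_iInter {S : Set W} : S ⊆ leafC Cl ℓ ↔ ℓ ∈ ⋂ v ∈ S, Cl v := by
  simp only [mem_iInter]
  rfl

theorem mem_of_inter_Vset_nonempty_of_subset_leafC {S : Set W} (hS : (S ∩ Vset Cl M).Nonempty)
    (hℓ : S ⊆ leafC Cl ℓ) : ℓ ∈ M := by
  obtain ⟨v, hvS, hvM⟩ := hS
  exact hvM (hℓ hvS)

theorem mem_of_mem_innerSet_of_subset_leafC
    (hleaf : ∀ ℓ ℓ' : Λ, ℓ ≠ ℓ' → ¬ leafC Cl ℓ ⊆ leafC Cl ℓ')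
    (hI : I ∈ innerSet Cl CI M) (hℓ : CI I ⊆ leafC Cl ℓ) : ℓ ∈ M := by
  rcases hI with ⟨ℓ₀, rfl, hC⟩ | ⟨_, hmeet, _⟩
  · exact (not_imp_not.mp (hleaf ℓ₀ ℓ) (hC ▸ hℓ)).symm
  · have hV : (CI I ∩ Vset Cl M).Nonempty := hmeet.mono (inter_subset_inter_right _ fun _ h => h.1)
    exact mem_of_inter_Vset_nonempty_of_subset_leafC hV hℓ

theorem mem_of_mem_middleSet_union_innerSet_of_subset_leafC
    (hleaf : ∀ ℓ ℓ' : Λ, ℓ ≠ ℓ' → ¬ leafC Cl ℓ ⊆ leafC Cl ℓ')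
    (hI : I ∈ middleSet Cl CI Q M ∪ innerSet Cl CI M) (hℓ : CI I ⊆ leafC Cl ℓ) : ℓ ∈ M :=
  hI.elim (fun h => mem_of_inter_Vset_nonempty_of_subset_leafC h.2.2 hℓ)
    (fun h => mem_of_mem_innerSet_of_subset_leafC hleaf h hℓ)

theorem mem_middleSet_union_innerSet_of_inter_Vset_nonempty (hI : I ∈ innerSet Cl CI Q)
    (hV : (CI I ∩ Vset Cl M).Nonempty) : I ∈ middleSet Cl CI Q M ∪ innerSet Cl CI M :=
  or_iff_not_imp_right.mpr fun hM => ⟨hI, hM, hV⟩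

theorem mem_innerSet_of_subset (hleaf : ∀ ℓ ℓ' : Λ, ℓ ≠ ℓ' → ¬ leafC Cl ℓ ⊆ leafC Cl ℓ')
    (hℓ : CI I₂ ⊆ leafC Cl ℓ) (hsub : CI I₁ ⊆ CI I₂) (hI₁ : I₁ ∈ innerSet Cl CI M) :
    I₂ ∈ innerSet Cl CI M := by
  have hℓM : ℓ ∈ M := mem_of_mem_innerSet_of_subset_leafC hleaf hI₁ (hsub.trans hℓ)
  rcases hI₁ with ⟨ℓ₀, rfl, hC⟩ | ⟨hM, hmeet, hUE⟩
  · obtain rfl : ℓ = ℓ₀ := hℓM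
    exact Or.inl ⟨ℓ, rfl, hℓ.antisymm (hC ▸ hsub)⟩
  · exact Or.inr ⟨hM, hmeet.mono (inter_subset_inter_left _ hsub), hUE.trans_subset hsub⟩

theorem mem_middleSet_union_innerSet_of_subset
    (hleaf : ∀ ℓ ℓ' : Λ, ℓ ≠ ℓ' → ¬ leafC Cl ℓ ⊆ leafC Cl ℓ')
    (hℓ : CI I₂ ⊆ leafC Cl ℓ) (hsub : CI I₁ ⊆ CI I₂)
    (hI₁ : I₁ ∈ middleSet Cl CI Q M ∪ innerSet Cl CI M) :
    I₂ ∈ middleSet Cl CI Q M ∪ innerSet Cl CI M := by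
  rcases hI₁ with ⟨hQ, _, hV⟩ | hM
  · exact mem_middleSet_union_innerSet_of_inter_Vset_nonempty
      (mem_innerSet_of_subset hleaf hℓ hsub hQ) (hV.mono (inter_subset_inter_left _ hsub))
  · exact Or.inr (mem_innerSet_of_subset hleaf hℓ hsub hM)

theorem notMem_middleSet_union_innerSet_of_mem_restQ (hI : I ∈ restQ Cl CI Q N k)
    (hm : m ∈ Icc 1 k) : I ∉ middleSet Cl CI Q (N m) ∪ innerSet Cl CI (N m) :=
  fun h => hI.2 (mem_biUnion hm h)

theorem notMem_middleSet_union_innerSet_of_mem_compSet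
    (hleaf : ∀ ℓ ℓ' : Λ, ℓ ≠ ℓ' → ¬ leafC Cl ℓ ⊆ leafC Cl ℓ')
    (hℓ : CI I ⊆ leafC Cl ℓ) (hi : i ∈ Icc 1 k) (hdisj : Disjoint (N i) (N j))
    (hI : I ∈ compSet Cl CI Q N k j) : I ∉ middleSet Cl CI Q (N i) ∪ innerSet Cl CI (N i) := by
  intro hIi
  rcases hI with hIj | hout
  · exact disjoint_left.mp hdisj
      (mem_of_mem_middleSet_union_innerSet_of_subset_leafC hleaf hIi hℓ)
      (mem_of_mem_middleSet_union_innerSet_of_subset_leafC hleaf hIj hℓ)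
  · exact notMem_middleSet_union_innerSet_of_mem_restQ hout.1 hi hIi

theorem mem_outerSet_of_subset (hleaf : ∀ ℓ ℓ' : Λ, ℓ ≠ ℓ' → ¬ leafC Cl ℓ ⊆ leafC Cl ℓ')
    (hℓ : CI I₂ ⊆ leafC Cl ℓ) (hi : i ∈ Icc 1 k) (hdisj : Disjoint (N i) (N j))
    (hI₁ : I₁ ∈ compSet Cl CI Q N k i) (hI₂ : I₂ ∈ compSet Cl CI Q N k j)
    (hsub : CI I₁ ⊆ CI I₂) : I₁ ∈ outerSet Cl CI Q N k i :=
  hI₁.resolve_left fun h =>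
    notMem_middleSet_union_innerSet_of_mem_compSet hleaf hℓ hi hdisj hI₂
      (mem_middleSet_union_innerSet_of_subset hleaf hℓ hsub h)

theorem inter_IprimeQ_nonempty_of_mem_restQ (hQ : Q.Nontrivial) (hI : I ∈ restQ Cl CI Q N k) :
    (CI I ∩ IprimeQ Cl Q N k).Nonempty := by
  rcases hI.1 with ⟨ℓ, hQℓ, _⟩ | ⟨_, ⟨v, hvI, hvQ⟩, _⟩
  · exact absurd hQℓ hQ.ne_singleton
  · refine ⟨v, hvI, hvQ, fun hv => ?_⟩
    obtain ⟨m, hm, hvm⟩ := mem_iUnion₂.mp hv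
    exact notMem_middleSet_union_innerSet_of_mem_restQ hI hm
      (mem_middleSet_union_innerSet_of_inter_Vset_nonempty hI.1 ⟨v, hvI, hvm⟩)

theorem mem_Jnat_of_mem (hcompat : Compatible Cl v (N m)) (hm : m ∈ Icc 1 k)
    (hv : v ∈ IprimeQ Cl Q N k) (hℓm : ℓ ∈ N m) (hℓv : ℓ ∈ Cl v) : m ∈ Jnat Cl N k v := by
  rcases hcompat with hvm | hmv | hempty
  · exact absurd (mem_biUnion hm hvm) hv.2
  · exact ⟨hm, hmv⟩
  · exact absurd ⟨hℓv, hℓm⟩ (hempty ▸ notMem_empty ℓ)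

theorem mem_JIset_of_subset_leafC (hcompat : ∀ v, Compatible Cl v (N m)) (hm : m ∈ Icc 1 k)
    (hℓm : ℓ ∈ N m) (hℓ : CI I ⊆ leafC Cl ℓ) : m ∈ JIset Cl CI Q N k I :=
  mem_iInter₂.mpr fun v hv => mem_Jnat_of_mem (hcompat v) hm hv.2 hℓm (hℓ hv.1)

theorem JIset_subset_Jnat (hvI : v ∈ CI I) (hv : v ∈ IprimeQ Cl Q N k) :
    JIset Cl CI Q N k I ⊆ Jnat Cl N k v :=
  biInter_subset_of_mem ⟨hvI, hv⟩

theorem JIset_anti (hsub : CI I₁ ⊆ CI I₂) : JIset Cl CI Q N k I₂ ⊆ JIset Cl CI Q N k I₁ :=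
  biInter_subset_biInter_left (inter_subset_inter_left _ hsub)

theorem JIset_nonempty (hcompat : ∀ v, ∀ m ∈ Icc 1 k, Compatible Cl v (N m))
    (hcover : Q ⊆ ⋃ m ∈ Icc 1 k, N m) (hmeet : (CI I ∩ IprimeQ Cl Q N k).Nonempty)
    (hℓ : CI I ⊆ leafC Cl ℓ) : (JIset Cl CI Q N k I).Nonempty := by
  obtain ⟨v, hvI, hv⟩ := hmeet
  have hℓQ : ℓ ∈ Q := hv.1.1 (hℓ hvI)
  obtain ⟨m, hm, hℓm⟩ := mem_iUnion₂.mp (hcover hℓQ)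
  exact ⟨m, mem_JIset_of_subset_leafC (hcompat · m hm) hm hℓm hℓ⟩

theorem bddAbove_JIset (hmeet : (CI I ∩ IprimeQ Cl Q N k).Nonempty) :
    BddAbove (JIset Cl CI Q N k I) := by
  obtain ⟨v, hvI, hv⟩ := hmeet
  exact ⟨k, fun m hm => (JIset_subset_Jnat hvI hv hm).1.2⟩

theorem mem_JIset_of_mem_outerSet (hne : (JIset Cl CI Q N k I).Nonempty)
    (hbdd : BddAbove (JIset Cl CI Q N k I)) (hI : I ∈ outerSet Cl CI Q N k m) :
    m ∈ JIset Cl CI Q N k I := by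
  have hLo : jLo Cl CI Q N k I ∈ JIset Cl CI Q N k I := Nat.sInf_mem hne
  have hHi : jHi Cl CI Q N k I ∈ JIset Cl CI Q N k I := Nat.sSup_mem hne hbdd
  rcases hI.2.2 with ⟨_, hm⟩ | ⟨_, hm, _⟩ | ⟨_, hm, _⟩
  · exact hm ▸ hLo
  · exact hm ▸ hLo
  · exact hm ▸ hHi

theorem mem_JIset_of_mem_compSet (hleaf : ∀ ℓ ℓ' : Λ, ℓ ≠ ℓ' → ¬ leafC Cl ℓ ⊆ leafC Cl ℓ')
    (hQ : Q.Nontrivial) (hcompat : ∀ v, ∀ m ∈ Icc 1 k, Compatible Cl v (N m))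
    (hcover : Q ⊆ ⋃ m ∈ Icc 1 k, N m) (hℓ : CI I ⊆ leafC Cl ℓ) (hm : m ∈ Icc 1 k)
    (hI : I ∈ compSet Cl CI Q N k m) : m ∈ JIset Cl CI Q N k I := by
  rcases hI with hI | hout
  · exact mem_JIset_of_subset_leafC (hcompat · m hm) hm
      (mem_of_mem_middleSet_union_innerSet_of_subset_leafC hleaf hI hℓ) hℓ
  · have hmeet := inter_IprimeQ_nonempty_of_mem_restQ hQ hout.1
    exact mem_JIset_of_mem_outerSet (JIset_nonempty hcompat hcover hmeet hℓ)
      (bddAbove_JIset hmeet) hout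

theorem not_one_mem_and_last_mem_Jnat (hJ : IsIntervalIn (Jnat Cl N k v))
    (hcover : Q ⊆ ⋃ m ∈ Icc 1 k, N m) (hv : v ∈ Iset Cl Q) :
    ¬ (1 ∈ Jnat Cl N k v ∧ k ∈ Jnat Cl N k v) := by
  rintro ⟨hone, hlast⟩
  refine hv.2 (hcover.trans (iUnion₂_subset fun m hm => ?_))
  exact (hJ 1 m k hm.1 hm.2 hone hlast).2

theorem sqQN_or_sqQN (hQ : PropertyQ Cl Q N k) {s : Set ℕ} (hs : ¬ (1 ∈ s ∧ k ∈ s))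
    (hi : i ∈ Icc 1 k) (hj : j ∈ Icc 1 k) (his : i ∈ s) (hjs : j ∈ s) (hij : i ≠ j) :
    sqQN Cl Q N k i j ∨ sqQN Cl Q N k j i := by
  wlog hlt : i < j generalizing i j
  · exact (this hj hi hjs his hij.symm (by omega)).symm
  have hends : (i, j) ≠ (1, k) := by
    rintro ⟨⟩
    exact hs ⟨his, hjs⟩
  obtain ⟨v, hv, h | h⟩ := hQ i j hi.1 hlt hj.2 hends
  · exact Or.inl (Or.inl ⟨hlt, v, hv, h⟩)
  · exact Or.inr (Or.inr ⟨hlt, v, hv, h⟩)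

theorem not_sqQN_of_mem_outerSet (hbdd : BddAbove (JIset Cl CI Q N k I))
    (hI : I ∈ outerSet Cl CI Q N k i) (hj : j ∈ JIset Cl CI Q N k I) (hij : i ≠ j) :
    ¬ sqQN Cl Q N k j i := by
  have hLo : jLo Cl CI Q N k I ≤ j := Nat.sInf_le hj
  have hHi : j ≤ jHi Cl CI Q N k I := le_csSup hbdd hj
  have hnotMem : ∀ v ∈ IprimeQ Cl Q N k, j ∉ Jnat Cl N k v → v ∉ CI I :=
    fun v hv hjv hvI => hjv (JIset_subset_Jnat hvI hv hj)
  rcases hI.2.2 with ⟨heq, hi⟩ | ⟨_, hi, hfree⟩ | ⟨_, hi, hfree⟩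
  · omega
  · rw [← hi] at hfree
    rintro (⟨hji, _⟩ | ⟨_, v, hv, hpred, hmem, hjv⟩)
    · omega
    · exact hfree ⟨v, ⟨hv, hnotMem v hv hjv⟩, hpred, hmem⟩
  · rw [← hi] at hfree
    rintro (⟨_, v, hv, hjv, hmem, hsucc⟩ | ⟨hij', _⟩)
    · exact hfree ⟨v, ⟨hv, hnotMem v hv hjv⟩, hmem, hsucc⟩
    · omega

theorem stmt13_general
    (hleaf : ∀ ℓ ℓ' : Λ, ℓ ≠ ℓ' → ¬ leafC Cl ℓ ⊆ leafC Cl ℓ')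
    (hHelly : ∀ I, (⋂ v ∈ CI I, Cl v).Nonempty)
    (hNne : ∀ i ∈ Icc 1 k, (N i).Nonempty)
    (hNdisj : ∀ i ∈ Icc 1 k, ∀ j ∈ Icc 1 k, i ≠ j → N i ∩ N j = ∅)
    (hNunion : (⋃ i ∈ Icc 1 k, N i) = Q)
    (hcompatN : ∀ v, ∀ i ∈ Icc 1 k, Compatible Cl v (N i))
    (hJint : ∀ v ∈ IprimeQ Cl Q N k, IsIntervalIn (Jnat Cl N k v))
    (hQprop : PropertyQ Cl Q N k)
    (hi : i ∈ Icc 1 k) (hj : j ∈ Icc 1 k) (hij : i ≠ j)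
    (hI₁ : I₁ ∈ compSet Cl CI Q N k i) (hI₂ : I₂ ∈ compSet Cl CI Q N k j)
    (hsub : CI I₁ ⊆ CI I₂) :
    sqQN Cl Q N k i j ∧ ¬ sqQN Cl Q N k j i ∧ I₁ ∈ outerSet Cl CI Q N k i := by
  have hdisj : Disjoint (N i) (N j) := disjoint_iff_inter_eq_empty.mpr (hNdisj i hi j hj hij)
  have hcover : Q ⊆ ⋃ m ∈ Icc 1 k, N m := hNunion.superset
  have hQ : Q.Nontrivial := by
    obtain ⟨⟨x, hx⟩, ⟨y, hy⟩⟩ := And.intro (hNne i hi) (hNne j hj)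
    rw [← hNunion]
    exact ⟨x, mem_biUnion hi hx, y, mem_biUnion hj hy, hdisj.ne_of_mem hx hy⟩
  obtain ⟨ℓ, hℓ⟩ := hHelly I₂
  rw [← subset_leafC_iff_mem_iInter] at hℓ
  have hout : I₁ ∈ outerSet Cl CI Q N k i :=
    mem_outerSet_of_subset hleaf hℓ hi hdisj hI₁ hI₂ hsub
  have hiJ : i ∈ JIset Cl CI Q N k I₁ :=
    mem_JIset_of_mem_compSet hleaf hQ hcompatN hcover (hsub.trans hℓ) hi hI₁
  have hjJ : j ∈ JIset Cl CI Q N k I₁ :=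
    JIset_anti hsub (mem_JIset_of_mem_compSet hleaf hQ hcompatN hcover hℓ hj hI₂)
  have hmeet := inter_IprimeQ_nonempty_of_mem_restQ hQ hout.1
  have hnot : ¬ sqQN Cl Q N k j i := not_sqQN_of_mem_outerSet (bddAbove_JIset hmeet) hout hjJ hij
  obtain ⟨v, hvI, hv⟩ := hmeet
  have hends := not_one_mem_and_last_mem_Jnat (hJint v hv) hcover hv.1
  have htotal := sqQN_or_sqQN hQprop hends hi hj (JIset_subset_Jnat hvI hv hiJ)
    (JIset_subset_Jnat hvI hv hjJ) hij
  exact ⟨htotal.resolve_right hnot, hnot, hout⟩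

end

theorem stmt13 [Fintype Λ] [Fintype W] [Fintype ι]
    (Cl : W → Set Λ) (CI : ι → Set W)
    (hCl : ∀ v, (Cl v).Nonempty)
    (hleaf : ∀ ℓ ℓ' : Λ, ℓ ≠ ℓ' → ¬ leafC Cl ℓ ⊆ leafC Cl ℓ')
    (hCI : ∀ I, (CI I).Nonempty)
    (hHelly : ∀ I, (⋂ v ∈ CI I, Cl v).Nonempty)
    (Q : Set Λ) (hQne : Q.Nonempty)
    (k : ℕ) (hk : 3 ≤ k)
    (N : ℕ → Set Λ)
    (hNne : ∀ i ∈ Set.Icc 1 k, (N i).Nonempty)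
    (hNdisj : ∀ i ∈ Set.Icc 1 k, ∀ j ∈ Set.Icc 1 k, i ≠ j → N i ∩ N j = ∅)
    (hNunion : (⋃ i ∈ Set.Icc 1 k, N i) = Q)
    (hcompatQ : ∀ v, Compatible Cl v Q)
    (hcompatN : ∀ v, ∀ i ∈ Set.Icc 1 k, Compatible Cl v (N i))
    (hJint : ∀ v ∈ IprimeQ Cl Q N k, IsIntervalIn (Jnat Cl N k v))
    (hQprop : ∀ j₁ j₂ : ℕ, 1 ≤ j₁ → j₁ < j₂ → j₂ ≤ k → (j₁, j₂) ≠ (1, k) →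
      ∃ v ∈ IprimeQ Cl Q N k,
        (j₁ ∉ Jnat Cl N k v ∧ j₂ ∈ Jnat Cl N k v ∧ j₂ + 1 ∈ Jnat Cl N k v) ∨
        (j₁ - 1 ∈ Jnat Cl N k v ∧ j₁ ∈ Jnat Cl N k v ∧ j₂ ∉ Jnat Cl N k v))
    (i j : ℕ) (hi : i ∈ Set.Icc 1 k) (hj : j ∈ Set.Icc 1 k) (hij : i ≠ j)
    (I₁ I₂ : ι) (hI₁ : I₁ ∈ compSet Cl CI Q N k i) (hI₂ : I₂ ∈ compSet Cl CI Q N k j)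
    (hne : I₁ ≠ I₂) (hsub : CI I₁ ⊆ CI I₂) :
    sqQN Cl Q N k i j ∧ ¬ sqQN Cl Q N k j i ∧ I₁ ∈ outerSet Cl CI Q N k i :=
  stmt13_general hleaf hHelly hNne hNdisj hNunion hcompatN hJint hQprop hi hj hij hI₁ hI₂ hsub
end
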